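/- Let φ, θ be smooth scalar fields and u a smooth vector field on (0,T) × ℝ^d with θ > 0 everywhere (no PDE is assumed). With s, e and μ defined from φ and θ as in the context, the pointwise identity u·∇s = (1/θ) u·∇e − (μ/θ)(u·∇φ) − div(∇G(∇φ)(∇φ·u)) + Σᵢⱼ (∇G(∇φ))ᵢ (∂ᵢuⱼ)(∂ⱼφ) holds everywhere on (0,T) × ℝ^d; here ∇G(∇φ)(∇φ·u) denotes the vector field obtained by multiplying the vector ∇G(∇φ) by the scalar ∇φ·u, and the last term equals (1/θ) σ̃:∇u for the Korteweg stress σ̃. -/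

import Mathlib

/-!
Write `F = ∂_θ f(φ, θ)` and `P = ∇G(∇φ)`. By the chain rule
`∂ⱼs = -∑ᵢ Pᵢ ∂ⱼ∂ᵢφ - ∂ⱼF`, and `∂ⱼe = ∂_φf ∂ⱼφ - θ ∂ⱼF` because the two terms `F ∂ⱼθ` cancel.
Expanding `div (P (∇φ·u))` with the product rule, the `div P` part cancels against the one in `μ/θ`,
the `∂_φf` parts cancel, and the term `∑ᵢⱼ Pᵢ ∂ᵢuⱼ ∂ⱼφ` is the one added back. What is left on both
sides is `-u·∇F` and `-∑ᵢⱼ Pᵢ uⱼ ∂ᵢ∂ⱼφ`, which agree by symmetry of second derivatives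
(`pd_comm`).

The only regularity point is that `f` is `C²` only on `ℝ × (0,∞)`: `F` is written there as a partial
derivative of the uncurried `f`, and positivity of `θ` keeps the argument inside the open half-plane.
-/

open MeasureTheory

noncomputable section

/-- `i`-th spatial partial derivative of a scalar field. -/
def pd {d : ℕ} (i : Fin d) (g : (Fin d → ℝ) → ℝ) (x : Fin d → ℝ) : ℝ :=
  fderiv ℝ g x (Pi.single i 1)

/-- Spatial gradient of a scalar field. -/
def grad {d : ℕ} (g : (Fin d → ℝ) → ℝ) (x : Fin d → ℝ) : Fin d → ℝ :=
  fun i => pd i g x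

/-- Divergence of a vector field. -/
def divg {d : ℕ} (u : (Fin d → ℝ) → Fin d → ℝ) (x : Fin d → ℝ) : ℝ :=
  ∑ i, pd i (fun y => u y i) x

/-- Euclidean dot product. -/
def dot {d : ℕ} (a b : Fin d → ℝ) : ℝ := ∑ i, a i * b i

/-- Time derivative of a time-dependent scalar field. -/
def dt {d : ℕ} (g : ℝ → (Fin d → ℝ) → ℝ) (t : ℝ) (x : Fin d → ℝ) : ℝ :=
  deriv (fun s => g s x) t

/-- The box `Ω = [0, L₁] × ⋯ × [0, L_d]`. -/
def box {d : ℕ} (L : Fin d → ℝ) : Set (Fin d → ℝ) :=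
  Set.univ.pi fun i => Set.Icc 0 (L i)

/-- Spatial periodicity with periods `L`. -/
def SpacePeriodic {d : ℕ} (L : Fin d → ℝ) (g : (Fin d → ℝ) → ℝ) : Prop :=
  ∀ x i, g (x + Pi.single i (L i)) = g x

/-- Entropy density `s = -G(∇φ) - ∂_θ f(φ, θ)`. -/
def entS {d : ℕ} (G : (Fin d → ℝ) → ℝ) (f : ℝ → ℝ → ℝ)
    (φ θ : ℝ → (Fin d → ℝ) → ℝ) (t : ℝ) (x : Fin d → ℝ) : ℝ :=
  -G (grad (φ t) x) - deriv (f (φ t x)) (θ t x)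

/-- Internal energy density `e = f(φ, θ) - θ ∂_θ f(φ, θ)`. -/
def intE {d : ℕ} (f : ℝ → ℝ → ℝ) (φ θ : ℝ → (Fin d → ℝ) → ℝ)
    (t : ℝ) (x : Fin d → ℝ) : ℝ :=
  f (φ t x) (θ t x) - θ t x * deriv (f (φ t x)) (θ t x)

/-- Total energy density `e_tot = e + |u|²/2`. -/
def totE {d : ℕ} (f : ℝ → ℝ → ℝ) (φ θ : ℝ → (Fin d → ℝ) → ℝ)
    (u : ℝ → (Fin d → ℝ) → Fin d → ℝ) (t : ℝ) (x : Fin d → ℝ) : ℝ :=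
  intE f φ θ t x + (1 / 2) * ∑ i, (u t x i) ^ 2

/-- Chemical potential `μ = -θ div(∇G(∇φ)) + ∂_φ f(φ, θ)`. -/
def chemMu {d : ℕ} (G : (Fin d → ℝ) → ℝ) (f : ℝ → ℝ → ℝ)
    (φ θ : ℝ → (Fin d → ℝ) → ℝ) (t : ℝ) (x : Fin d → ℝ) : ℝ :=
  -θ t x * divg (fun y => grad G (grad (φ t) y)) x
    + deriv (fun a => f a (θ t x)) (φ t x)

/-- Korteweg stress `σ̃ᵢⱼ = θ (∇G(∇φ))ᵢ ∂ⱼφ`. -/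
def korteweg {d : ℕ} (G : (Fin d → ℝ) → ℝ)
    (φ θ : ℝ → (Fin d → ℝ) → ℝ) (t : ℝ) (x : Fin d → ℝ) (i j : Fin d) : ℝ :=
  θ t x * grad G (grad (φ t) x) i * pd j (φ t) x

/-- Symmetric gradient `Dw = (∇w + (∇w)ᵀ)/2` of a (spatial) vector field. -/
def symGrad {d : ℕ} (w : (Fin d → ℝ) → Fin d → ℝ) (x : Fin d → ℝ) (i j : Fin d) : ℝ :=
  (pd i (fun y => w y j) x + pd j (fun y => w y i) x) / 2

/-- A derivative in the direction `v`, expanded in the coordinate partial derivatives. -/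
lemma fderiv_eq_sum_grad {d : ℕ} (g : (Fin d → ℝ) → ℝ) (x v : Fin d → ℝ) :
    fderiv ℝ g x v = ∑ i, grad g x i * v i := by
  have hv : v = ∑ i, v i • (Pi.single i (1 : ℝ) : Fin d → ℝ) := pi_eq_sum_univ' v
  conv_lhs => rw [hv, map_sum]
  simp [grad, pd, mul_comm]

lemma contDiff_pd {d : ℕ} {m n : WithTop ℕ∞} (i : Fin d) {g : (Fin d → ℝ) → ℝ}
    (hg : ContDiff ℝ n g) (hmn : m + 1 ≤ n) : ContDiff ℝ m (pd i g) :=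
  (hg.fderiv_right hmn).clm_apply contDiff_const

lemma contDiff_grad {d : ℕ} {m n : WithTop ℕ∞} {g : (Fin d → ℝ) → ℝ}
    (hg : ContDiff ℝ n g) (hmn : m + 1 ≤ n) : ContDiff ℝ m (grad g) :=
  contDiff_pi.2 fun i => contDiff_pd i hg hmn

lemma pd_comm {d : ℕ} (i j : Fin d) {g : (Fin d → ℝ) → ℝ} (hg : ContDiff ℝ 2 g)
    (x : Fin d → ℝ) : pd i (pd j g) x = pd j (pd i g) x := by
  have hd : DifferentiableAt ℝ (fderiv ℝ g) x :=
    ((hg.fderiv_right (m := 1) (by norm_num)).differentiable (by norm_num)) x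
  have key : ∀ k l : Fin d, pd k (pd l g) x
      = fderiv ℝ (fderiv ℝ g) x (Pi.single k 1) (Pi.single l 1) := by
    intro k l
    change fderiv ℝ (fun y => fderiv ℝ g y (Pi.single l 1)) x (Pi.single k 1) = _
    rw [fderiv_clm_apply hd (differentiableAt_const _)]
    simp
  rw [key, key]
  exact (hg.contDiffAt.isSymmSndFDerivAt (by simp)) _ _

lemma pd_mul {d : ℕ} (i : Fin d) {a b : (Fin d → ℝ) → ℝ} {x : Fin d → ℝ}
    (ha : DifferentiableAt ℝ a x) (hb : DifferentiableAt ℝ b x) :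
    pd i (fun y => a y * b y) x = pd i a x * b x + a x * pd i b x := by
  unfold pd
  rw [fderiv_fun_mul ha hb]
  simp
  ring

lemma pd_sub {d : ℕ} (i : Fin d) {a b : (Fin d → ℝ) → ℝ} {x : Fin d → ℝ}
    (ha : DifferentiableAt ℝ a x) (hb : DifferentiableAt ℝ b x) :
    pd i (fun y => a y - b y) x = pd i a x - pd i b x := by
  unfold pd
  rw [fderiv_fun_sub ha hb]
  simp

lemma pd_neg {d : ℕ} (i : Fin d) (a : (Fin d → ℝ) → ℝ) (x : Fin d → ℝ) :
    pd i (fun y => -a y) x = -pd i a x := by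
  unfold pd
  rw [fderiv_fun_neg]
  simp

lemma pd_sum {d : ℕ} (i : Fin d) {a : Fin d → (Fin d → ℝ) → ℝ} {x : Fin d → ℝ}
    (ha : ∀ j, DifferentiableAt ℝ (a j) x) :
    pd i (fun y => ∑ j, a j y) x = ∑ j, pd i (a j) x := by
  unfold pd
  rw [fderiv_fun_sum fun j _ => ha j]
  simp

lemma pd_comp_field {d : ℕ} (j : Fin d) {G : (Fin d → ℝ) → ℝ} {w : (Fin d → ℝ) → Fin d → ℝ}
    {x : Fin d → ℝ} (hG : DifferentiableAt ℝ G (w x)) (hw : DifferentiableAt ℝ w x) :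
    pd j (fun y => G (w y)) x = ∑ i, grad G (w x) i * pd j (fun y => w y i) x := by
  have h : fderiv ℝ (fun y => G (w y)) x = (fderiv ℝ G (w x)).comp (fderiv ℝ w x) :=
    fderiv_comp x hG hw
  have hcoord : ∀ i, pd j (fun y => w y i) x = fderiv ℝ w x (Pi.single j 1) i := by
    intro i
    unfold pd
    rw [fderiv_apply hw i]
    rfl
  simp only [hcoord]
  rw [← fderiv_eq_sum_grad, pd, h]
  rfl

lemma deriv_snd_eq {f : ℝ → ℝ → ℝ} {a b : ℝ}
    (h : DifferentiableAt ℝ (fun q : ℝ × ℝ => f q.1 q.2) (a, b)) :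
    deriv (f a) b = fderiv ℝ (fun q : ℝ × ℝ => f q.1 q.2) (a, b) (0, 1) := by
  have h1 : HasDerivAt (fun s : ℝ => (a, s)) ((0 : ℝ), (1 : ℝ)) b :=
    (hasDerivAt_const b a).prodMk (hasDerivAt_id b)
  exact (HasFDerivAt.comp_hasDerivAt b (l := fun q : ℝ × ℝ => f q.1 q.2) h.hasFDerivAt h1).deriv

lemma deriv_fst_eq {f : ℝ → ℝ → ℝ} {a b : ℝ}
    (h : DifferentiableAt ℝ (fun q : ℝ × ℝ => f q.1 q.2) (a, b)) :
    deriv (fun s => f s b) a = fderiv ℝ (fun q : ℝ × ℝ => f q.1 q.2) (a, b) (1, 0) := by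
  have h1 : HasDerivAt (fun s : ℝ => (s, b)) ((1 : ℝ), (0 : ℝ)) a :=
    (hasDerivAt_id a).prodMk (hasDerivAt_const a b)
  exact (HasFDerivAt.comp_hasDerivAt a (l := fun q : ℝ × ℝ => f q.1 q.2) h.hasFDerivAt h1).deriv

lemma pd_comp_pair {d : ℕ} (j : Fin d) {f : ℝ → ℝ → ℝ} {p q : (Fin d → ℝ) → ℝ} {x : Fin d → ℝ}
    (h : DifferentiableAt ℝ (fun r : ℝ × ℝ => f r.1 r.2) (p x, q x))
    (hp : DifferentiableAt ℝ p x) (hq : DifferentiableAt ℝ q x) :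
    pd j (fun y => f (p y) (q y)) x
      = deriv (fun a => f a (q x)) (p x) * pd j p x + deriv (f (p x)) (q x) * pd j q x := by
  have hc := h.hasFDerivAt.comp x (hp.hasFDerivAt.prodMk hq.hasFDerivAt)
  have hc' : fderiv ℝ (fun y => f (p y) (q y)) x = _ := hc.fderiv
  rw [deriv_fst_eq h, deriv_snd_eq h]
  unfold pd
  rw [hc']
  set L := fderiv ℝ (fun r : ℝ × ℝ => f r.1 r.2) (p x, q x)
  set a := fderiv ℝ p x (Pi.single j 1) with ha
  set b := fderiv ℝ q x (Pi.single j 1) with hb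
  have hab : ((a, b) : ℝ × ℝ) = a • ((1 : ℝ), (0 : ℝ)) + b • ((0 : ℝ), (1 : ℝ)) := by simp
  change L (a, b) = _
  rw [hab, map_add, map_smul, map_smul, smul_eq_mul, smul_eq_mul]
  ring

/-- The field `∂_θ f(φ, θ)` is differentiable, although `f` is regular only where its second
argument is positive. -/
lemma differentiable_deriv_snd_comp {d : ℕ} {f : ℝ → ℝ → ℝ}
    (hf : ContDiffOn ℝ 2 (fun q : ℝ × ℝ => f q.1 q.2) (Set.univ ×ˢ Set.Ioi 0))
    {p q : (Fin d → ℝ) → ℝ} (hp : Differentiable ℝ p) (hq : Differentiable ℝ q)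
    (hpos : ∀ x, 0 < q x) :
    Differentiable ℝ fun y => deriv (f (p y)) (q y) := by
  intro x
  have hopen : IsOpen ((Set.univ : Set ℝ) ×ˢ Set.Ioi (0 : ℝ)) := isOpen_univ.prod isOpen_Ioi
  have hat : ∀ y, ContDiffAt ℝ 2 (fun r : ℝ × ℝ => f r.1 r.2) (p y, q y) := fun y =>
    hf.contDiffAt (hopen.mem_nhds ⟨Set.mem_univ _, hpos y⟩)
  have heq : (fun y => deriv (f (p y)) (q y))
      = fun y => fderiv ℝ (fun r : ℝ × ℝ => f r.1 r.2) (p y, q y) (0, 1) :=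
    funext fun y => deriv_snd_eq ((hat y).differentiableAt (by norm_num))
  rw [heq]
  have h1 : DifferentiableAt ℝ (fderiv ℝ (fun r : ℝ × ℝ => f r.1 r.2)) (p x, q x) :=
    ((hat x).fderiv_right (m := 1) (by norm_num)).differentiableAt (by norm_num)
  have h2 : DifferentiableAt ℝ (fun y => fderiv ℝ (fun r : ℝ × ℝ => f r.1 r.2) (p y, q y)) x :=
    DifferentiableAt.comp x h1 ((hp x).prodMk (hq x))
  exact h2.clm_apply (differentiableAt_const _)

/-- The algebra left once every derivative is expanded: `A i j` stands for `∂ᵢ∂ⱼφ`, `P` for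
`∇G(∇φ)`, `D i` for `∂ᵢPᵢ`, `B i j` for `∂ᵢuⱼ`, `F` for `∇(∂_θ f(φ, θ))`, `w` for `∇φ`, `c` for
`∂_φ f` and `τ` for `θ`. -/
lemma entropy_algebra {d : ℕ} (A B : Fin d → Fin d → ℝ) (hA : ∀ i j, A i j = A j i)
    (P D U w F : Fin d → ℝ) (τ c : ℝ) (hτ : τ ≠ 0) :
    ∑ j, U j * (-(∑ i, P i * A j i) - F j)
      = τ⁻¹ * ∑ j, U j * (c * w j - τ * F j)
        - (-τ * ∑ i, D i + c) / τ * ∑ j, U j * w j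
        - ∑ i, (D i * (∑ j, w j * U j) + P i * ∑ j, (A i j * U j + w j * B i j))
        + ∑ i, ∑ j, P i * B i j * w j := by
  have e1 : ∑ j, U j * (-(∑ i, P i * A j i) - F j)
      = -(∑ i, ∑ j, P i * A i j * U j) - ∑ j, U j * F j := by
    rw [Finset.sum_comm, ← Finset.sum_neg_distrib, ← Finset.sum_sub_distrib]
    refine Finset.sum_congr rfl fun j _ => ?_
    rw [mul_sub, mul_neg, Finset.mul_sum]
    congr 2
    refine Finset.sum_congr rfl fun i _ => ?_
    rw [hA j i]
    ring
  have e2 : ∑ j, U j * (c * w j - τ * F j) = c * ∑ j, U j * w j - τ * ∑ j, U j * F j := by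
    rw [Finset.mul_sum, Finset.mul_sum, ← Finset.sum_sub_distrib]
    exact Finset.sum_congr rfl fun j _ => by ring
  have e3 : ∑ i, (D i * (∑ j, w j * U j) + P i * ∑ j, (A i j * U j + w j * B i j))
      = (∑ i, D i) * (∑ j, U j * w j) + ∑ i, ∑ j, P i * A i j * U j
        + ∑ i, ∑ j, P i * B i j * w j := by
    rw [Finset.sum_mul, ← Finset.sum_add_distrib, ← Finset.sum_add_distrib]
    refine Finset.sum_congr rfl fun i _ => ?_
    rw [add_assoc, ← Finset.sum_add_distrib, Finset.mul_sum (s := Finset.univ) (a := P i)]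
    congr 1
    · exact congrArg _ (Finset.sum_congr rfl fun j _ => by ring)
    · exact Finset.sum_congr rfl fun j _ => by ring
  rw [e1, e2, e3]
  field_simp
  ring

/-- pointwise identity for the convective entropy term (no PDE assumed). -/
theorem entropy_convection_identity
    {d : ℕ} (hd : d = 1 ∨ d = 2 ∨ d = 3)
    (T : ℝ) (hT : 0 < T)
    (G : (Fin d → ℝ) → ℝ) (hG : ContDiff ℝ 2 G)
    (f : ℝ → ℝ → ℝ)
    (hf : ContDiffOn ℝ 2 (fun q : ℝ × ℝ => f q.1 q.2) (Set.univ ×ˢ Set.Ioi 0))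
    (φ θ : ℝ → (Fin d → ℝ) → ℝ)
    (hφ : ContDiff ℝ (⊤ : ℕ∞) fun q : ℝ × (Fin d → ℝ) => φ q.1 q.2)
    (hθsm : ContDiff ℝ (⊤ : ℕ∞) fun q : ℝ × (Fin d → ℝ) => θ q.1 q.2)
    (hθpos : ∀ t x, 0 < θ t x)
    (u : ℝ → (Fin d → ℝ) → Fin d → ℝ)
    (husm : ContDiff ℝ (⊤ : ℕ∞) fun q : ℝ × (Fin d → ℝ) => u q.1 q.2) :
    ∀ t ∈ Set.Ioo (0 : ℝ) T, ∀ x,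
      dot (u t x) (grad (entS G f φ θ t) x)
        = (θ t x)⁻¹ * dot (u t x) (grad (intE f φ θ t) x)
          - chemMu G f φ θ t x / θ t x * dot (u t x) (grad (φ t) x)
          - divg (fun y i =>
              grad G (grad (φ t) y) i * dot (grad (φ t) y) (u t y)) x
          + ∑ i, ∑ j,
              grad G (grad (φ t) x) i * pd i (fun y => u t y j) x * pd j (φ t) x := by
  intro t _ x
  have hslice : ContDiff ℝ (⊤ : ℕ∞) fun y : Fin d → ℝ => (t, y) := contDiff_const.prodMk contDiff_id
  have hp2 : ContDiff ℝ 2 (φ t) := (hφ.comp hslice).of_le (WithTop.coe_le_coe.2 (le_top : (2 : ℕ∞) ≤ ⊤))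
  have hq : Differentiable ℝ (θ t) := (hθsm.comp hslice).differentiable (by simp)
  have hu : Differentiable ℝ (u t) := (husm.comp hslice).differentiable (by simp)
  have huj : ∀ j, Differentiable ℝ fun y => u t y j := fun j => differentiable_pi.1 hu j
  have hp : Differentiable ℝ (φ t) := hp2.differentiable (by norm_num)
  have hgp : Differentiable ℝ (grad (φ t)) :=
    (contDiff_grad (m := 1) hp2 (by norm_num)).differentiable (by norm_num)
  have hpj : ∀ j, Differentiable ℝ (pd j (φ t)) := fun j => differentiable_pi.1 hgp j
  have hGd : Differentiable ℝ G := hG.differentiable (by norm_num)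
  have hP : ∀ i, Differentiable ℝ fun y => grad G (grad (φ t) y) i := fun i =>
    ((contDiff_pd (m := 1) i hG (by norm_num)).differentiable (by norm_num)).comp hgp
  have hF : Differentiable ℝ fun y => deriv (f (φ t y)) (θ t y) :=
    differentiable_deriv_snd_comp hf hp hq (hθpos t)
  have hfat : ∀ y, DifferentiableAt ℝ (fun r : ℝ × ℝ => f r.1 r.2) (φ t y, θ t y) := fun y =>
    (hf.contDiffAt (x := (φ t y, θ t y)) ((isOpen_univ.prod isOpen_Ioi).mem_nhds
      ⟨Set.mem_univ _, hθpos t y⟩)).differentiableAt (by norm_num)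
  have hfc : Differentiable ℝ fun y => f (φ t y) (θ t y) := fun y =>
    DifferentiableAt.comp (g := fun r : ℝ × ℝ => f r.1 r.2) y (hfat y) ((hp y).prodMk (hq y))
  have hGc : Differentiable ℝ fun y => G (grad (φ t) y) := hGd.comp hgp
  have hs : ∀ j, grad (entS G f φ θ t) x j
      = -(∑ i, grad G (grad (φ t) x) i * pd j (pd i (φ t)) x)
        - pd j (fun y => deriv (f (φ t y)) (θ t y)) x := by
    intro j
    change pd j (fun y => -G (grad (φ t) y) - deriv (f (φ t y)) (θ t y)) x = _
    rw [pd_sub j (hGc x).fun_neg (hF x), pd_neg, pd_comp_field j (hGd _) (hgp x)]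
    rfl
  have he : ∀ j, grad (intE f φ θ t) x j
      = deriv (fun a => f a (θ t x)) (φ t x) * pd j (φ t) x
        - θ t x * pd j (fun y => deriv (f (φ t y)) (θ t y)) x := by
    intro j
    change pd j (fun y => f (φ t y) (θ t y) - θ t y * deriv (f (φ t y)) (θ t y)) x = _
    rw [pd_sub j (hfc x) ((hq x).fun_mul (hF x)), pd_mul j (hq x) (hF x),
      pd_comp_pair j (hfat x) (hp x) (hq x)]
    ring
  have hdiv : divg (fun y i => grad G (grad (φ t) y) i * dot (grad (φ t) y) (u t y)) x
      = ∑ i, (pd i (fun y => grad G (grad (φ t) y) i) x * (∑ j, pd j (φ t) x * u t x j)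
        + grad G (grad (φ t) x) i
          * ∑ j, (pd i (pd j (φ t)) x * u t x j + pd j (φ t) x * pd i (fun y => u t y j) x)) := by
    refine Finset.sum_congr rfl fun i _ => ?_
    have hm : ∀ j, DifferentiableAt ℝ (fun y => pd j (φ t) y * u t y j) x := fun j =>
      (hpj j x).mul (huj j x)
    change pd i (fun y => grad G (grad (φ t) y) i * ∑ j, pd j (φ t) y * u t y j) x = _
    rw [pd_mul i (hP i x) (DifferentiableAt.fun_sum fun j _ => hm j), pd_sum i hm]
    congr 2
    exact Finset.sum_congr rfl fun j _ => pd_mul i (hpj j x) (huj j x)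
  rw [hdiv]
  simp only [dot, hs, he]
  exact entropy_algebra (fun i j => pd i (pd j (φ t)) x) (fun i j => pd i (fun y => u t y j) x)
    (fun i j => pd_comm i j hp2 x) (grad G (grad (φ t) x))
    (fun i => pd i (fun y => grad G (grad (φ t) y) i) x) (u t x) (fun j => pd j (φ t) x)
    (fun j => pd j (fun y => deriv (f (φ t y)) (θ t y)) x) (θ t x)
    (deriv (fun a => f a (θ t x)) (φ t x)) (hθpos t x).ne'
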